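/- Let (i,j) ∈ E be an edge of a finite connected simple graph G and let α_i, α_j ∈ [0,1). Then c_OR(i,j) ≤ Const_α + Slope_α·△(i,j). Moreover Slope_α > 0, so the affine map t ↦ Const_α + Slope_α·t is nondecreasing on [0, ρ_min − 1]. -/

import Mathlib

namespace Curv

open Finset

noncomputable section

variable {V : Type*} [Fintype V] [DecidableEq V] (G : SimpleGraph V) [DecidableRel G.Adj]

/-- `μ` is a probability distribution on the (finite) vertex set. -/
def IsProb (μ : V → ℝ) : Prop := (∀ x, 0 ≤ μ x) ∧ ∑ x, μ x = 1

/-- `π` is a coupling of `μ` and `ν`. -/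
def IsCoupling (μ ν : V → ℝ) (π : V → V → ℝ) : Prop :=
  (∀ x y, 0 ≤ π x y) ∧ (∀ x, ∑ y, π x y = μ x) ∧ (∀ y, ∑ x, π x y = ν y)

/-- Transport cost of a plan `π` with respect to the shortest-path graph distance. -/
def cost (π : V → V → ℝ) : ℝ := ∑ x, ∑ y, (G.dist x y : ℝ) * π x y

/-- Wasserstein-1 distance between two distributions on the vertex set. -/
def W1 (μ ν : V → ℝ) : ℝ := sInf {c : ℝ | ∃ π, IsCoupling μ ν π ∧ cost G π = c}

/-- Dirac mass at `u`. -/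
def dirac (u : V) : V → ℝ := fun x => if x = u then 1 else 0

/-- Uniform distribution on the neighbours of `u`. -/
def unif (u : V) : V → ℝ := fun x => if G.Adj u x then ((G.degree u : ℝ))⁻¹ else 0

/-- Lazy random-walk measure with laziness parameter `α`. -/
def mGen (α : ℝ) (u : V) : V → ℝ := fun x => α * dirac u x + (1 - α) * unif G u x

/-- Canonical laziness `1/(deg u + 1)`. -/
def alphaL (u : V) : ℝ := ((G.degree u : ℝ) + 1)⁻¹

/-- The lazy random-walk measure `m_u`. -/
def mLazy (u : V) : V → ℝ := mGen G (alphaL G u) u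

/-- Ollivier–Ricci curvature (lazy). -/
def cOR (i j : V) : ℝ := 1 - W1 G (mLazy G i) (mLazy G j)

/-- Non-lazy Ollivier–Ricci curvature. -/
def cOR0 (i j : V) : ℝ := 1 - W1 G (unif G i) (unif G j)

/-- Positive part `[x]₊`. -/
def pos (x : ℝ) : ℝ := max x 0

/-- Triangle count `△(u,v)`. -/
def tri (u v : V) : ℕ := (G.neighborFinset u ∩ G.neighborFinset v).card

/-- Unique neighbours `N(u) \ (N(v) ∪ {v})`. -/
def uniq (u v : V) : Finset V := G.neighborFinset u \ insert v (G.neighborFinset v)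

/-- `ξ_u(u,v)`: unique neighbours of `u` having a neighbour among unique neighbours of `v`. -/
def xiSet (u v : V) : Finset V := (uniq G u v).filter fun k => ∃ w ∈ uniq G v u, G.Adj k w

/-- `Ξ_uv`. -/
def Xi (u v : V) : ℕ := (xiSet G u v).card + (xiSet G v u).card

/-- `□̃(k,u,v) = |N(k) ∩ (N(v)\(N(u)∪{u}))|`. -/
def boxT (k u v : V) : ℕ := (G.neighborFinset k ∩ uniq G v u).card

/-- `ϖ_max(u,v)`. -/
def varpi (u v : V) : ℕ :=
  max (((G.neighborFinset u).erase v).sup fun k => boxT G k u v)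
      (((G.neighborFinset v).erase u).sup fun w => boxT G w v u)

/-- `þ_max(u,v) = ϖ_max(u,v)·max{ρ_u,ρ_v}`. -/
def thMax (u v : V) : ℕ := varpi G u v * max (G.degree u) (G.degree v)

/-- Edgewise 4-cycle coefficient `C₄(u,v)`. -/
def C4 (u v : V) : ℝ := if 0 < Xi G u v then (Xi G u v : ℝ) / (thMax G u v : ℝ) else 0

/-- Graph-wide 4-cycle constant `C₄(G)`. -/
def C4Graph : ℝ := sSup {x : ℝ | ∃ u v, G.Adj u v ∧ x = C4 G u v}

def rhoMin (i j : V) : ℕ := min (G.degree i) (G.degree j)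

def rhoMax (i j : V) : ℕ := max (G.degree i) (G.degree j)

/-- `𝔖(i,j)`. -/
def frakS (i j : V) : ℝ := 2 / (G.degree i : ℝ) + 2 / (G.degree j : ℝ) - 2

/-- `𝔗(i,j)`. -/
def frakT (i j : V) : ℝ := 2 / (rhoMax G i j : ℝ) + 1 / (rhoMin G i j : ℝ)

/-- `𝔎(i,j)`. -/
def frakK (i j : V) : ℝ := 1 - 1 / (rhoMin G i j : ℝ) - 1 / (rhoMax G i j : ℝ)

/-- `Z_min(i,j)`. -/
def Zmin (i j : V) : ℝ := (tri G i j : ℝ) / (rhoMin G i j : ℝ)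

/-- `Z_max(i,j)`. -/
def Zmax (i j : V) : ℝ := (tri G i j : ℝ) / (rhoMax G i j : ℝ)

/-- Balanced Forman curvature. -/
def cBF (i j : V) : ℝ :=
  if rhoMin G i j = 1 then 0
  else frakS G i j + frakT G i j * (tri G i j : ℝ) + C4 G i j

/-- `M` is a matching in the cross-edge bipartite graph `B_ij`. -/
def IsCrossMatching (i j : V) (M : Finset (V × V)) : Prop :=
  (∀ p ∈ M, p.1 ∈ uniq G i j ∧ p.2 ∈ uniq G j i ∧ G.Adj p.1 p.2) ∧
  (∀ p ∈ M, ∀ q ∈ M, p ≠ q → p.1 ≠ q.1 ∧ p.2 ≠ q.2)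

/-- Maximum matching size `𝔪(i,j)` in the cross-edge bipartite graph. -/
def matchNum (i j : V) : ℕ :=
  sSup {n : ℕ | ∃ M : Finset (V × V), IsCrossMatching G i j M ∧ M.card = n}

/-- `𝒮(i,j) = 𝔪(i,j)/ρ_max`. -/
def SS (i j : V) : ℝ := (matchNum G i j : ℝ) / (rhoMax G i j : ℝ)

/-- Lazy per-neighbour weight `w_u = (1-α)/ρ_u`. -/
def wA (α : ℝ) (u : V) : ℝ := (1 - α) / (G.degree u : ℝ)

/-- Lazy conductance sum `Σ`. -/
def SigmaA (αi αj : ℝ) (i j : V) : ℝ :=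
  (G.degree i : ℝ) / (1 - αi) + (G.degree j : ℝ) / (1 - αj)

/-- `Const_α`. -/
def ConstA (αi αj : ℝ) (i j : V) : ℝ :=
  -1 + 2 * (min αi ((1 - αj) / (G.degree j : ℝ)) + min αj ((1 - αi) / (G.degree i : ℝ)))
    + (pos (αi - (1 - αj) / (G.degree j : ℝ)) + pos ((1 - αj) / (G.degree j : ℝ) - αi)
      + pos (αj - (1 - αi) / (G.degree i : ℝ)) + pos ((1 - αi) / (G.degree i : ℝ) - αj))
    + ((G.degree i : ℝ) + (G.degree j : ℝ) - 2) / SigmaA G αi αj i j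

/-- `Slope_α`. -/
def SlopeA (αi αj : ℝ) (i j : V) : ℝ := wA G αi i + wA G αj j - 2 / SigmaA G αi αj i j

/-- `α_⋆`: `α_min` when the non-lazy curvature is nonnegative, `α_max` otherwise. -/
def alphaStar (i j : V) : ℝ :=
  if 0 ≤ cOR0 G i j then min (alphaL G i) (alphaL G j) else max (alphaL G i) (alphaL G j)

/-- `Δ_ij(α) = α_max − α_min` for the canonical laziness. -/
def DeltaL (i j : V) : ℝ := max (alphaL G i) (alphaL G j) - min (alphaL G i) (alphaL G j)

/-!
Write `Uᵢ = uniq G i j`, `Uⱼ = uniq G j i`. The mass `wᵢ |Uᵢ|` that `mᵢ` puts on `Uᵢ` lies off the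
support of `mⱼ`, so every coupling moves it by distance at least one, and symmetrically for
`wⱼ |Uⱼ|`. Hence `W₁(mᵢ, mⱼ)` is at least the average of `wᵢ |Uᵢ|` and `wⱼ |Uⱼ|` with weights
proportional to `wᵢ` and `wⱼ`. As `|Uᵢ| = ρᵢ - 1 - △` and `Σ = 1 / wᵢ + 1 / wⱼ`, this average is
exactly `1 - (Const_α + Slope_α △)`. The slope is `wᵢ + wⱼ` minus the harmonic mean of
`wᵢ` and `wⱼ`, hence positive.
-/

section Transport

variable {G} {μ ν : V → ℝ} {π : V → V → ℝ}

omit [DecidableEq V] in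
theorem IsCoupling.eq_zero_of_right (hπ : IsCoupling μ ν π) {y : V} (hy : ν y = 0) (x : V) :
    π x y = 0 := by
  have hcol : ∑ x, π x y = 0 := (hπ.2.2 y).trans hy
  exact (sum_eq_zero_iff_of_nonneg fun x _ => hπ.1 x y).1 hcol x (mem_univ x)

omit [DecidableEq V] in
theorem IsCoupling.swap (hπ : IsCoupling μ ν π) : IsCoupling ν μ (Function.swap π) :=
  ⟨fun x y => hπ.1 y x, hπ.2.2, hπ.2.1⟩

omit [DecidableEq V] in
theorem IsProb.isCoupling_mul (hμ : IsProb μ) (hν : IsProb ν) :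
    IsCoupling μ ν fun x y => μ x * ν y := by
  refine ⟨fun x y => mul_nonneg (hμ.1 x) (hν.1 y), fun x => ?_, fun y => ?_⟩
  · rw [← mul_sum, hν.2, mul_one]
  · rw [← sum_mul, hμ.2, one_mul]

omit [DecidableEq V] [DecidableRel G.Adj] in
theorem cost_swap (π : V → V → ℝ) : cost G (Function.swap π) = cost G π := by
  unfold cost Function.swap
  rw [sum_comm]
  simp only [G.dist_comm]

omit [DecidableEq V] [DecidableRel G.Adj] in
theorem W1_comm (μ ν : V → ℝ) : W1 G μ ν = W1 G ν μ := by
  unfold W1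
  congr 1
  ext c
  constructor <;> rintro ⟨π, hπ, rfl⟩ <;> exact ⟨_, hπ.swap, cost_swap π⟩

-- `G.dist` is `0` between distinct components, so `0 < G.dist x y` says more than `x ≠ y`.
omit [DecidableEq V] [DecidableRel G.Adj] in
theorem IsCoupling.sum_le_cost_of_dist_pos (hπ : IsCoupling μ ν π) {S : Finset V}
    (hS : ∀ x ∈ S, ∀ y, ν y ≠ 0 → 0 < G.dist x y) : ∑ x ∈ S, μ x ≤ cost G π := by
  have le_dist_mul : ∀ x ∈ S, ∀ y, π x y ≤ G.dist x y * π x y := by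
    intro x hx y
    by_cases hy : ν y = 0
    · simp [hπ.eq_zero_of_right hy]
    · exact le_mul_of_one_le_left (hπ.1 x y) (mod_cast hS x hx y hy)
  calc ∑ x ∈ S, μ x = ∑ x ∈ S, ∑ y, π x y := sum_congr rfl fun x _ => (hπ.2.1 x).symm
    _ ≤ ∑ x ∈ S, ∑ y, G.dist x y * π x y :=
      sum_le_sum fun x hx => sum_le_sum fun y _ => le_dist_mul x hx y
    _ ≤ cost G π := sum_le_univ_sum_of_nonneg fun x =>
      sum_nonneg fun y _ => mul_nonneg (Nat.cast_nonneg _) (hπ.1 x y)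

omit [DecidableEq V] [DecidableRel G.Adj] in
theorem sum_le_W1_of_dist_pos (hμ : IsProb μ) (hν : IsProb ν) {S : Finset V}
    (hS : ∀ x ∈ S, ∀ y, ν y ≠ 0 → 0 < G.dist x y) : ∑ x ∈ S, μ x ≤ W1 G μ ν := by
  refine le_csInf ⟨_, _, hμ.isCoupling_mul hν, rfl⟩ ?_
  rintro _ ⟨π, hπ, rfl⟩
  exact hπ.sum_le_cost_of_dist_pos hS

end Transport

section RandomWalk

variable {G} {α β : ℝ} {u v x y : V}

theorem mGen_of_adj (hux : G.Adj u x) : mGen G α u x = wA G α u := by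
  simp [mGen, dirac, unif, wA, hux, hux.ne', div_eq_mul_inv]

theorem eq_or_adj_of_mGen_ne_zero (hx : mGen G α u x ≠ 0) : x = u ∨ G.Adj u x := by
  contrapose! hx
  simp [mGen, dirac, unif, hx]

theorem isProb_mGen (hα : α ∈ Set.Icc (0 : ℝ) 1) (hu : 0 < G.degree u) :
    IsProb (mGen G α u) := by
  have hα' : 0 ≤ 1 - α := sub_nonneg.2 hα.2
  have hdirac : ∑ x, dirac u x = 1 := by simp [dirac]
  have hunif : ∑ x, unif G u x = 1 := by
    simp [unif, ← sum_filter, ← SimpleGraph.neighborFinset_eq_filter, hu.ne']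
  constructor
  · intro x
    have := hα.1
    unfold mGen dirac unif
    positivity
  · simp only [mGen, sum_add_distrib, ← mul_sum, hdirac, hunif]
    ring

theorem sum_mGen_uniq (α : ℝ) (u v : V) :
    ∑ x ∈ uniq G u v, mGen G α u x = wA G α u * #(uniq G u v) := by
  have hconst : ∀ x ∈ uniq G u v, mGen G α u x = wA G α u := fun x hx =>
    mGen_of_adj ((G.mem_neighborFinset u x).1 (mem_sdiff.1 hx).1)
  rw [sum_congr rfl hconst, sum_const, nsmul_eq_mul, mul_comm]

theorem card_uniq (huv : G.Adj u v) : (#(uniq G u v) : ℝ) = G.degree u - 1 - tri G u v := by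
  have hinter : insert v (G.neighborFinset v) ∩ G.neighborFinset u =
      insert v (G.neighborFinset u ∩ G.neighborFinset v) := by
    rw [insert_inter_of_mem (by simpa using huv), inter_comm]
  have hcard : #(uniq G u v) + (tri G u v + 1) = G.degree u := by
    rw [uniq, tri, ← card_insert_of_notMem (a := v) (by simp), ← hinter, inter_comm,
      card_sdiff_add_card_inter, G.card_neighborFinset_eq_degree]
  rw [← hcard]
  push_cast
  ring

theorem tri_comm (u v : V) : tri G u v = tri G v u := by
  rw [tri, tri, inter_comm]

theorem dist_pos_of_mem_uniq (huv : G.Adj u v) (hx : x ∈ uniq G u v)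
    (hy : y = v ∨ G.Adj v y) : 0 < G.dist x y := by
  simp only [uniq, mem_sdiff, SimpleGraph.mem_neighborFinset, mem_insert] at hx
  have hvy : G.Reachable v y := hy.elim (· ▸ .refl _) (·.reachable)
  have hxy : G.Reachable x y := (hx.1.symm.reachable.trans huv.reachable).trans hvy
  refine hxy.pos_dist_of_ne ?_
  rintro rfl
  exact hx.2 hy

theorem wA_mul_card_uniq_le_W1 (huv : G.Adj u v) (hα : α ∈ Set.Icc (0 : ℝ) 1)
    (hβ : β ∈ Set.Icc (0 : ℝ) 1) :
    wA G α u * #(uniq G u v) ≤ W1 G (mGen G α u) (mGen G β v) := by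
  rw [← sum_mGen_uniq]
  exact sum_le_W1_of_dist_pos (isProb_mGen hα huv.degree_pos_left)
    (isProb_mGen hβ huv.degree_pos_right)
    fun x hx y hy => dist_pos_of_mem_uniq huv hx (eq_or_adj_of_mGen_ne_zero hy)

end RandomWalk

section Envelope

theorem two_div_inv_add_inv_lt_add {a b : ℝ} (ha : 0 < a) (hb : 0 < b) :
    2 / (a⁻¹ + b⁻¹) < a + b := by
  have hharm : a⁻¹ + b⁻¹ = (a + b) / (a * b) := by field_simp; ring
  rw [hharm, div_div_eq_mul_div, div_lt_iff₀ (by positivity)]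
  nlinarith [mul_pos ha hb]

theorem two_mul_min_add_pos_sub_add_pos_sub (a b : ℝ) :
    2 * min a b + (pos (a - b) + pos (b - a)) = a + b := by
  unfold pos
  grind

variable {G} {α β : ℝ} {u v : V}

omit [DecidableEq V] in
theorem wA_pos (hα : α < 1) (hu : 0 < G.degree u) : 0 < wA G α u :=
  div_pos (sub_pos.2 hα) (Nat.cast_pos.2 hu)

omit [DecidableEq V] in
theorem wA_mul_degree (α : ℝ) (hu : 0 < G.degree u) : wA G α u * G.degree u = 1 - α :=
  div_mul_cancel₀ _ (Nat.cast_ne_zero.2 hu.ne')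

omit [DecidableEq V] in
theorem SigmaA_eq_inv_add_inv (α β : ℝ) (u v : V) :
    SigmaA G α β u v = (wA G α u)⁻¹ + (wA G β v)⁻¹ := by
  simp only [SigmaA, wA, inv_div]

omit [DecidableEq V] in
theorem SlopeA_pos (huv : G.Adj u v) (hα : α < 1) (hβ : β < 1) : 0 < SlopeA G α β u v := by
  rw [SlopeA, SigmaA_eq_inv_add_inv, sub_pos]
  exact two_div_inv_add_inv_lt_add (wA_pos hα huv.degree_pos_left) (wA_pos hβ huv.degree_pos_right)

omit [DecidableEq V] in
theorem ConstA_eq (α β : ℝ) (u v : V) :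
    ConstA G α β u v = -1 + (α + wA G β v) + (β + wA G α u)
      + ((G.degree u : ℝ) + G.degree v - 2) / SigmaA G α β u v := by
  rw [← two_mul_min_add_pos_sub_add_pos_sub α, ← two_mul_min_add_pos_sub_add_pos_sub β]
  unfold ConstA wA
  ring

omit [DecidableEq V] in
theorem one_sub_envelope_eq (huv : G.Adj u v) (hα : α < 1) (hβ : β < 1) (t : ℝ) :
    1 - (ConstA G α β u v + SlopeA G α β u v * t) =
      (wA G α u * (wA G α u * (G.degree u - 1 - t)) +
        wA G β v * (wA G β v * (G.degree v - 1 - t))) / (wA G α u + wA G β v) := by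
  have hwu : 0 < wA G α u := wA_pos hα huv.degree_pos_left
  have hwv : 0 < wA G β v := wA_pos hβ huv.degree_pos_right
  have hα_eq : α = 1 - wA G α u * G.degree u := by
    rw [wA_mul_degree α huv.degree_pos_left, sub_sub_cancel]
  have hβ_eq : β = 1 - wA G β v * G.degree v := by
    rw [wA_mul_degree β huv.degree_pos_right, sub_sub_cancel]
  rw [ConstA_eq, SlopeA, SigmaA_eq_inv_add_inv]
  generalize wA G α u = a at *
  generalize wA G β v = b at *
  subst hα_eq hβ_eq
  field_simp
  ring

theorem one_sub_W1_mGen_le (huv : G.Adj u v) (hα : α ∈ Set.Ico (0 : ℝ) 1)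
    (hβ : β ∈ Set.Ico (0 : ℝ) 1) :
    1 - W1 G (mGen G α u) (mGen G β v) ≤ ConstA G α β u v + SlopeA G α β u v * tri G u v := by
  have hwu : 0 < wA G α u := wA_pos hα.2 huv.degree_pos_left
  have hwv : 0 < wA G β v := wA_pos hβ.2 huv.degree_pos_right
  have hleft := wA_mul_card_uniq_le_W1 huv (Set.Ico_subset_Icc_self hα) (Set.Ico_subset_Icc_self hβ)
  have hright :=
    wA_mul_card_uniq_le_W1 huv.symm (Set.Ico_subset_Icc_self hβ) (Set.Ico_subset_Icc_self hα)
  rw [card_uniq huv] at hleft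
  rw [card_uniq huv.symm, tri_comm v u, W1_comm] at hright
  rw [sub_le_comm, one_sub_envelope_eq huv hα.2 hβ.2, div_le_iff₀' (add_pos hwu hwv), add_mul]
  gcongr

end Envelope

theorem stmt12_general (i j : V) (hij : G.Adj i j)
    (αi αj : ℝ) (hαi : αi ∈ Set.Ico (0 : ℝ) 1) (hαj : αj ∈ Set.Ico (0 : ℝ) 1) :
    1 - W1 G (mGen G αi i) (mGen G αj j)
      ≤ ConstA G αi αj i j + SlopeA G αi αj i j * (tri G i j : ℝ) ∧
    0 < SlopeA G αi αj i j ∧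
    Monotone fun t : ℝ => ConstA G αi αj i j + SlopeA G αi αj i j * t := by
  have hslope : 0 < SlopeA G αi αj i j := SlopeA_pos hij hαi.2 hαj.2
  exact ⟨one_sub_W1_mGen_le hij hαi hαj, hslope,
    (monotone_id.const_mul hslope.le).const_add _⟩

/-- monotone affine coverage envelope for the lazy OR curvature. -/
theorem stmt12 (hG : G.Connected) (i j : V) (hij : G.Adj i j)
    (αi αj : ℝ) (hαi : αi ∈ Set.Ico (0:ℝ) 1) (hαj : αj ∈ Set.Ico (0:ℝ) 1) :
    (1 - W1 G (mGen G αi i) (mGen G αj j)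
      ≤ ConstA G αi αj i j + SlopeA G αi αj i j * (tri G i j : ℝ)) ∧
    0 < SlopeA G αi αj i j ∧
    (∀ s t : ℝ, 0 ≤ s → s ≤ t → t ≤ (rhoMin G i j : ℝ) - 1 →
      ConstA G αi αj i j + SlopeA G αi αj i j * s
        ≤ ConstA G αi αj i j + SlopeA G αi αj i j * t) := by
  obtain ⟨hbound, hslope, hmono⟩ := stmt12_general G i j hij αi αj hαi hαj
  exact ⟨hbound, hslope, fun s t _ hst _ => hmono hst⟩

end

end Curv
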